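/- arXiv:1608.08443 — 2 statements merged into one kernel-verified Lean document; each statement's English description precedes it below -/
import Mathlib

section
/- Let s ∈ (0,1), let Ω ⊂ ℝ be a finite union of bounded open intervals with pairwise disjoint closures, let v ∈ C¹(Ω) be absolutely integrable over Ω, and let x ∈ Ω. Set Φ_s(y) = |y|^{1−2s}/(1−2s) for s ≠ 1/2 and Φ_s(y) = log|y| for s = 1/2, so that (d/dx)Φ_s(x−y) = sgn(x−y)|x−y|^{−2s}. Then the principal value lim_{ε→0⁺} ∫_{Ω∖(x−ε,x+ε)} sgn(x−y)|x−y|^{−2s} v(y) dy exists, the function G(x) = ∫_Ω Φ_s(x−y) v(y) dy is differentiable at x, and G'(x) = lim_{ε→0⁺} ∫_{Ω∖(x−ε,x+ε)} sgn(x−y)|x−y|^{−2s} v(y) dy. -/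
open MeasureTheory Filter Set

/-- `Φ_s(y) = |y|^{1−2s}/(1−2s)` for `s ≠ 1/2`, and `Φ_{1/2}(y) = log|y|`. -/
noncomputable def Phi (s y : ℝ) : ℝ :=
  if s = 1 / 2 then Real.log |y| else |y| ^ (1 - 2 * s) / (1 - 2 * s)

/-!
Cut `v` off smoothly near `x`: on `Ω`, `v = u + w` with `u` of class `C¹` and compactly supported,
and `w` vanishing near `x`. For `w` the kernel is never evaluated near its singularity, so one
differentiates under the integral sign and the principal value is an ordinary integral. For `u`,
differentiating the convolution `Φ ⋆ u` puts the derivative on `u`, giving `∫ Φ (x - y) u' (y) dy`.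
Integrating by parts outside `(x - ε, x + ε)` turns this into the truncated integral of `Φ'` against
`u`, up to the boundary term `Φ ε (u (x + ε) - u (x - ε))`. Evenness of `Φ` makes this a symmetric
difference, hence `O(ε Φ(ε)) = o(1)`.
-/

open scoped Topology ContDiff
open Bornology

variable {E : Type*} [NormedAddCommGroup E] [NormedSpace ℝ E]

section PrincipalValue

variable {f g : ℝ → E} {x : ℝ} {L L' : E}

/-- The principal value at `x` of the integral of `f` over the real line exists and equals `L`:
the integrals over the complements of the symmetric intervals `(x - ε, x + ε)` tend to `L`.
Integrals over a set `Ω` are covered by taking for `f` an indicator function. -/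
def HasPrincipalValueAt (f : ℝ → E) (x : ℝ) (L : E) : Prop :=
  Tendsto (fun ε : ℝ => ∫ y in (Ioo (x - ε) (x + ε))ᶜ, f y) (𝓝[>] 0) (𝓝 L)

theorem hasPrincipalValueAt_indicator_iff {Ω : Set ℝ} (hΩ : MeasurableSet Ω) :
    HasPrincipalValueAt (Ω.indicator f) x L ↔
      Tendsto (fun ε : ℝ => ∫ y in Ω \ Ioo (x - ε) (x + ε), f y) (𝓝[>] 0) (𝓝 L) := by
  simp only [HasPrincipalValueAt, setIntegral_indicator hΩ, sdiff_eq, inter_comm]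

theorem HasPrincipalValueAt.add (hf : HasPrincipalValueAt f x L) (hg : HasPrincipalValueAt g x L')
    (hf_int : ∀ ε > 0, IntegrableOn f (Ioo (x - ε) (x + ε))ᶜ)
    (hg_int : ∀ ε > 0, IntegrableOn g (Ioo (x - ε) (x + ε))ᶜ) :
    HasPrincipalValueAt (fun y => f y + g y) x (L + L') := by
  refine (Tendsto.add hf hg).congr' ?_
  filter_upwards [self_mem_nhdsWithin] with ε hε
  exact (integral_add (hf_int ε hε) (hg_int ε hε)).symm

theorem hasPrincipalValueAt_integral (hf : Integrable f) :
    HasPrincipalValueAt f x (∫ y, f y) := by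
  have hvol : Tendsto (volume ∘ fun ε : ℝ => Ioo (x - ε) (x + ε)) (𝓝[>] 0) (𝓝 0) := by
    have hcont : Continuous fun ε : ℝ => ENNReal.ofReal (x + ε - (x - ε)) :=
      ENNReal.continuous_ofReal.comp (by fun_prop)
    simpa [Function.comp_def] using (hcont.tendsto 0).mono_left nhdsWithin_le_nhds
  simpa only [HasPrincipalValueAt, setIntegral_compl measurableSet_Ioo hf, sub_zero] using
    tendsto_const_nhds.sub (hf.tendsto_setIntegral_nhds_zero hvol)

end PrincipalValue

theorem integral_compl_Ioo_of_hasDerivAt [CompleteSpace E] {F F' : ℝ → E} {a b : ℝ} (hab : a < b)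
    (hF : HasCompactSupport F) (hderiv : ∀ y ∉ Ioo a b, HasDerivAt F (F' y) y)
    (hint : IntegrableOn F' (Ioo a b)ᶜ) : ∫ y in (Ioo a b)ᶜ, F' y = F a - F b := by
  have hcompl : (Ioo a b)ᶜ = Iic a ∪ Ici b := by
    rw [← Ioi_inter_Iio, compl_inter, compl_Ioi, compl_Iio]
  have hzero : Tendsto F (cocompact ℝ) (𝓝 0) := hF.is_zero_at_infty
  rw [hcompl] at hint
  have hleft : ∫ y in Iic a, F' y = F a - 0 :=
    integral_Iic_of_hasDerivAt_of_tendsto' (fun y hy => hderiv y fun h => h.1.not_ge hy)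
      hint.left_of_union (hzero.mono_left atBot_le_cocompact)
  have hright : ∫ y in Ioi b, F' y = 0 - F b :=
    integral_Ioi_of_hasDerivAt_of_tendsto' (fun y hy => hderiv y fun h => h.2.not_ge hy)
      (hint.right_of_union.mono_set Ioi_subset_Ici_self) (hzero.mono_left atTop_le_cocompact)
  rw [hcompl, setIntegral_union (Iic_disjoint_Ici.2 hab.not_ge) measurableSet_Ici
    hint.left_of_union hint.right_of_union, integral_Ici_eq_integral_Ioi, hleft, hright]
  abel

theorem tendsto_smul_symm_sub {φ : ℝ → ℝ} {u : ℝ → E} {x : ℝ}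
    (hφ : Tendsto (fun ε => φ ε * ε) (𝓝[>] 0) (𝓝 0)) (hu : DifferentiableAt ℝ u x) :
    Tendsto (fun ε => φ ε • (u (x + ε) - u (x - ε))) (𝓝[>] 0) (𝓝 0) := by
  have hdiff : DifferentiableAt ℝ (fun ε => u (x + ε) - u (x - ε)) 0 := by
    refine DifferentiableAt.sub ?_ ?_
    · exact (show DifferentiableAt ℝ u (x + 0) by simpa).comp 0 (by fun_prop)
    · exact (show DifferentiableAt ℝ u (x - 0) by simpa).comp 0 (by fun_prop)
  have hbigO : (fun ε => u (x + ε) - u (x - ε)) =O[𝓝[>] 0] fun ε : ℝ => ε := by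
    simpa using hdiff.isBigO_sub.mono nhdsWithin_le_nhds
  exact ((Asymptotics.isBigO_refl φ _).smul hbigO).trans_tendsto hφ

section ContinuousKernel

variable {k : ℝ → ℝ} {w : ℝ → E}

theorem integrableOn_comp_sub_smul (hk : ContinuousOn k {0}ᶜ) (hw : Integrable w)
    (hsupp : HasCompactSupport w) {S : Set ℝ} (hS : IsClosed S) {t : ℝ} (ht : t ∉ S) :
    IntegrableOn (fun y => k (t - y) • w y) S := by
  have hcont : ContinuousOn (fun y => k (t - y)) (S ∩ tsupport w) :=
    hk.comp (by fun_prop) fun y hy => sub_ne_zero.2 fun h => ht (h ▸ hy.1)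
  refine IntegrableOn.of_inter_support hS.measurableSet ?_
  refine (hw.integrableOn.continuousOn_smul hcont (hsupp.isCompact.inter_left hS)).mono_set ?_
  exact inter_subset_inter_right S ((Function.support_smul_subset_right _ _).trans
    (subset_tsupport w))

theorem integrable_comp_sub_smul (hk : ContinuousOn k {0}ᶜ) (hw : Integrable w)
    (hsupp : HasCompactSupport w) {t : ℝ} (ht : t ∉ tsupport w) :
    Integrable fun y => k (t - y) • w y :=
  (integrableOn_iff_integrable_of_support_subset
    ((Function.support_smul_subset_right _ _).trans (subset_tsupport w))).1
    (integrableOn_comp_sub_smul hk hw hsupp (isClosed_tsupport w) ht)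

theorem integrableOn_compl_Ioo_comp_sub_smul (hk : ContinuousOn k {0}ᶜ) (hw : Integrable w)
    (hsupp : HasCompactSupport w) (x : ℝ) {ε : ℝ} (hε : 0 < ε) :
    IntegrableOn (fun y => k (x - y) • w y) (Ioo (x - ε) (x + ε))ᶜ :=
  integrableOn_comp_sub_smul hk hw hsupp isOpen_Ioo.isClosed_compl
    (notMem_compl_iff.2 ⟨by linarith, by linarith⟩)

theorem exists_bound_comp_sub (hk : ContinuousOn k {0}ᶜ) {S : Set ℝ} (hS : IsCompact S) {x : ℝ}
    (hx : x ∉ S) : ∃ C, ∀ᶠ t in 𝓝 x, ∀ y ∈ S, ‖k (t - y)‖ ≤ C := by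
  obtain ⟨δ, hδ, hball⟩ := Metric.nhds_basis_closedBall.mem_iff.1 (hS.isClosed.compl_mem_nhds hx)
  have hcompact : IsCompact ((fun p : ℝ × ℝ => p.1 - p.2) '' Metric.closedBall x δ ×ˢ S) :=
    ((isCompact_closedBall x δ).prod hS).image (by fun_prop)
  obtain ⟨C, hC⟩ := hcompact.exists_bound_of_continuousOn (hk.mono (by
    rintro _ ⟨p, hp, rfl⟩
    exact sub_ne_zero.2 fun h => hball hp.1 (h ▸ hp.2)))
  refine ⟨C, ?_⟩
  filter_upwards [Metric.closedBall_mem_nhds x hδ] with t ht y hy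
  exact hC _ ⟨(t, y), ⟨ht, hy⟩, rfl⟩

end ContinuousKernel

theorem exists_contDiff_hasCompactSupport_eventuallyEq {F : Type*} [NormedAddCommGroup F]
    [NormedSpace ℝ F] [FiniteDimensional ℝ F] {v : F → E} {x : F} {n : WithTop ℕ∞} (hn : n < ∞)
    (hv : ContDiffAt ℝ n v x) :
    ∃ u : F → E, ContDiff ℝ n u ∧ HasCompactSupport u ∧ u =ᶠ[𝓝 x] v := by
  obtain ⟨r, hr, hball⟩ := Metric.nhds_basis_closedBall.mem_iff.1 (hv.eventually hn.ne)
  let χ : ContDiffBump x := ⟨r / 2, r, half_pos hr, half_lt_self hr⟩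
  refine ⟨fun y => χ y • v y, contDiff_iff_contDiffAt.2 fun y => ?_,
    χ.hasCompactSupport.smul_right, ?_⟩
  · by_cases hy : y ∈ tsupport χ
    · have hvy : ContDiffAt ℝ n v y := hball (χ.tsupport_eq ▸ hy)
      exact (χ.contDiffAt.of_le hn.le).smul hvy
    · refine contDiffAt_const (c := (0 : E)) |>.congr_of_eventuallyEq ?_
      filter_upwards [notMem_tsupport_iff_eventuallyEq.1 hy] with z hz
      simp [hz]
  · filter_upwards [χ.eventuallyEq_one] with y hy
    simp [hy]

theorem exists_contDiff_add_eq_indicator {Ω : Set ℝ} {v : ℝ → E} {x : ℝ}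
    (hΩ : MeasurableSet Ω) (hbdd : IsBounded Ω) (hxΩ : Ω ∈ 𝓝 x) (hv : ContDiffAt ℝ 1 v x)
    (hint : IntegrableOn v Ω) :
    ∃ u w : ℝ → E, ContDiff ℝ 1 u ∧ HasCompactSupport u ∧ Integrable w ∧ HasCompactSupport w ∧
      x ∉ tsupport w ∧ u + w = Ω.indicator v := by
  obtain ⟨u, hu, husupp, huv⟩ := exists_contDiff_hasCompactSupport_eventuallyEq (by simp) hv
  have hvsupp : HasCompactSupport (Ω.indicator v) :=
    .of_support_subset_isCompact hbdd.isCompact_closure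
      (support_indicator_subset.trans subset_closure)
  refine ⟨u, Ω.indicator v - u, hu, husupp,
    (hint.integrable_indicator hΩ).sub (hu.continuous.integrable_of_hasCompactSupport husupp),
    hvsupp.sub husupp, notMem_tsupport_iff_eventuallyEq.2 ?_, add_sub_cancel _ _⟩
  filter_upwards [hxΩ, huv] with y hyΩ hy
  simp [hyΩ, hy]

section Kernel

variable {Φ κ : ℝ → ℝ}

theorem continuousOn_compl_zero_of_hasDerivAt (hΦ : ∀ z ≠ 0, HasDerivAt Φ (κ z) z) :
    ContinuousOn Φ {0}ᶜ :=
  fun z hz => (hΦ z hz).continuousAt.continuousWithinAt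

section AwayFromSingularity

variable {w : ℝ → E} {x : ℝ}

theorem hasDerivAt_integral_comp_sub_smul_of_notMem_tsupport
    (hΦ : ∀ z ≠ 0, HasDerivAt Φ (κ z) z) (hκ : ContinuousOn κ {0}ᶜ) (hw : Integrable w)
    (hsupp : HasCompactSupport w) (hx : x ∉ tsupport w) :
    HasDerivAt (fun t => ∫ y, Φ (t - y) • w y) (∫ y, κ (x - y) • w y) x := by
  have hΦint {t : ℝ} (ht : t ∉ tsupport w) : Integrable fun y => Φ (t - y) • w y :=
    integrable_comp_sub_smul (continuousOn_compl_zero_of_hasDerivAt hΦ) hw hsupp ht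
  have hnhds : ∀ᶠ t in 𝓝 x, t ∉ tsupport w := (isClosed_tsupport w).compl_mem_nhds hx
  obtain ⟨C, hC⟩ := exists_bound_comp_sub hκ hsupp.isCompact hx
  refine (hasDerivAt_integral_of_dominated_loc_of_deriv_le (F := fun t y => Φ (t - y) • w y)
    (F' := fun t y => κ (t - y) • w y) (bound := fun y => C * ‖w y‖) (hnhds.and hC)
    (hnhds.mono fun t ht => (hΦint ht).aestronglyMeasurable) (hΦint hx)
    (integrable_comp_sub_smul hκ hw hsupp hx).aestronglyMeasurable ?_ (hw.norm.const_mul C) ?_).2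
  · refine ae_of_all _ fun y t ht => ?_
    by_cases hy : y ∈ tsupport w
    · rw [norm_smul]
      gcongr
      exact ht.2 y hy
    · simp [image_eq_zero_of_notMem_tsupport hy]
  · refine ae_of_all _ fun y t ht => ?_
    by_cases hy : y ∈ tsupport w
    · have hne : t - y ≠ 0 := sub_ne_zero.2 fun h => ht.1 (h ▸ hy)
      exact ((hΦ _ hne).comp_sub_const t y).smul_const (w y)
    · simpa [image_eq_zero_of_notMem_tsupport hy] using hasDerivAt_const t (0 : E)

end AwayFromSingularity

section CompactlySupported

variable {u : ℝ → E}

theorem integrable_comp_sub_smul_of_locallyIntegrable (hloc : LocallyIntegrable Φ)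
    (hu : Continuous u) (hsupp : HasCompactSupport u) (t : ℝ) :
    Integrable fun y => Φ (t - y) • u y :=
  (hsupp.convolutionExists_right (ContinuousLinearMap.lsmul ℝ ℝ) hloc hu t).integrable_swap

theorem hasDerivAt_integral_comp_sub_smul_of_contDiff (hloc : LocallyIntegrable Φ)
    (hu : ContDiff ℝ 1 u) (hsupp : HasCompactSupport u) (x : ℝ) :
    HasDerivAt (fun t => ∫ y, Φ (t - y) • u y) (∫ y, Φ (x - y) • deriv u y) x := by
  have hconv := hsupp.hasDerivAt_convolution_right (ContinuousLinearMap.lsmul ℝ ℝ) hloc hu x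
  rw [convolution_lsmul_swap] at hconv
  exact hconv.congr_of_eventuallyEq (.of_forall fun t => convolution_lsmul_swap.symm)

theorem integral_compl_Ioo_comp_sub_smul_eq [CompleteSpace E]
    (hΦ : ∀ z ≠ 0, HasDerivAt Φ (κ z) z) (hκ : ContinuousOn κ {0}ᶜ)
    (hu : ContDiff ℝ 1 u) (hsupp : HasCompactSupport u) (x : ℝ) {ε : ℝ} (hε : 0 < ε) :
    ∫ y in (Ioo (x - ε) (x + ε))ᶜ, κ (x - y) • u y =
      (∫ y in (Ioo (x - ε) (x + ε))ᶜ, Φ (x - y) • deriv u y) +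
        (Φ (-ε) • u (x + ε) - Φ ε • u (x - ε)) := by
  have hderiv : ∀ y ∉ Ioo (x - ε) (x + ε), HasDerivAt (fun y => Φ (x - y) • u y)
      (Φ (x - y) • deriv u y - κ (x - y) • u y) y := by
    intro y hy
    have hne : x - y ≠ 0 := sub_ne_zero.2 fun h => hy ⟨by linarith, by linarith⟩
    refine (((hΦ _ hne).comp_const_sub x y).smul
      (hu.differentiable one_ne_zero y).hasDerivAt).congr_deriv ?_
    rw [neg_smul, ← sub_eq_add_neg]
  have hκint : IntegrableOn (fun y => κ (x - y) • u y) (Ioo (x - ε) (x + ε))ᶜ :=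
    integrableOn_compl_Ioo_comp_sub_smul hκ
      (hu.continuous.integrable_of_hasCompactSupport hsupp) hsupp x hε
  have hΦint : IntegrableOn (fun y => Φ (x - y) • deriv u y) (Ioo (x - ε) (x + ε))ᶜ :=
    integrableOn_compl_Ioo_comp_sub_smul (continuousOn_compl_zero_of_hasDerivAt hΦ)
      ((hu.continuous_deriv le_rfl).integrable_of_hasCompactSupport hsupp.deriv) hsupp.deriv x hε
  have hFTC : (∫ y in (Ioo (x - ε) (x + ε))ᶜ, Φ (x - y) • deriv u y) -
      ∫ y in (Ioo (x - ε) (x + ε))ᶜ, κ (x - y) • u y = Φ ε • u (x - ε) - Φ (-ε) • u (x + ε) := by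
    rw [← integral_sub hΦint hκint, integral_compl_Ioo_of_hasDerivAt (by linarith)
      hsupp.smul_left hderiv (hΦint.sub hκint)]
    simp
  rw [← neg_sub (Φ ε • _), ← hFTC]
  abel

theorem hasPrincipalValueAt_comp_sub_smul_of_contDiff [CompleteSpace E]
    (hΦ : ∀ z ≠ 0, HasDerivAt Φ (κ z) z) (hκ : ContinuousOn κ {0}ᶜ)
    (heven : Function.Even Φ) (hloc : LocallyIntegrable Φ)
    (hlim : Tendsto (fun ε => Φ ε * ε) (𝓝[>] 0) (𝓝 0))
    (hu : ContDiff ℝ 1 u) (hsupp : HasCompactSupport u) (x : ℝ) :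
    HasPrincipalValueAt (fun y => κ (x - y) • u y) x (∫ y, Φ (x - y) • deriv u y) := by
  have hmain : HasPrincipalValueAt (fun y => Φ (x - y) • deriv u y) x
      (∫ y, Φ (x - y) • deriv u y) :=
    hasPrincipalValueAt_integral (integrable_comp_sub_smul_of_locallyIntegrable hloc
      (hu.continuous_deriv le_rfl) hsupp.deriv x)
  have hboundary := tendsto_smul_symm_sub hlim (hu.differentiable one_ne_zero x)
  rw [← add_zero (∫ y, Φ (x - y) • deriv u y)]
  refine (Tendsto.add hmain hboundary).congr' ?_
  filter_upwards [self_mem_nhdsWithin] with ε hε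
  rw [integral_compl_Ioo_comp_sub_smul_eq hΦ hκ hu hsupp x hε, heven ε, smul_sub]

end CompactlySupported

theorem exists_tendsto_and_hasDerivAt_setIntegral_comp_sub_smul [CompleteSpace E]
    (hΦ : ∀ z ≠ 0, HasDerivAt Φ (κ z) z) (hκ : ContinuousOn κ {0}ᶜ)
    (heven : Function.Even Φ) (hloc : LocallyIntegrable Φ)
    (hlim : Tendsto (fun ε => Φ ε * ε) (𝓝[>] 0) (𝓝 0))
    {Ω : Set ℝ} (hΩ : MeasurableSet Ω) (hbdd : IsBounded Ω) {x : ℝ} (hxΩ : Ω ∈ 𝓝 x)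
    {v : ℝ → E} (hv : ContDiffAt ℝ 1 v x) (hint : IntegrableOn v Ω) :
    ∃ L : E,
      Tendsto (fun ε : ℝ => ∫ y in Ω \ Ioo (x - ε) (x + ε), κ (x - y) • v y) (𝓝[>] 0) (𝓝 L) ∧
      HasDerivAt (fun t => ∫ y in Ω, Φ (t - y) • v y) L x := by
  obtain ⟨u, w, hu, husupp, hw, hwsupp, hxw, huw⟩ :=
    exists_contDiff_add_eq_indicator hΩ hbdd hxΩ hv hint
  have hsplit (k : ℝ → ℝ) (t : ℝ) :
      Ω.indicator (fun y => k (t - y) • v y) = fun y => k (t - y) • u y + k (t - y) • w y := by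
    rw [indicator_smul, ← huw]
    exact funext fun y => smul_add _ _ _
  refine ⟨(∫ y, Φ (x - y) • deriv u y) + ∫ y, κ (x - y) • w y, ?_, ?_⟩
  · rw [← hasPrincipalValueAt_indicator_iff hΩ, hsplit]
    have huint : Integrable u := hu.continuous.integrable_of_hasCompactSupport husupp
    exact (hasPrincipalValueAt_comp_sub_smul_of_contDiff hΦ hκ heven hloc hlim hu husupp x).add
      (hasPrincipalValueAt_integral (integrable_comp_sub_smul hκ hw hwsupp hxw))
      (fun ε hε => integrableOn_compl_Ioo_comp_sub_smul hκ huint husupp x hε)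
      (fun ε hε => integrableOn_compl_Ioo_comp_sub_smul hκ hw hwsupp x hε)
  · refine ((hasDerivAt_integral_comp_sub_smul_of_contDiff hloc hu husupp x).add
      (hasDerivAt_integral_comp_sub_smul_of_notMem_tsupport hΦ hκ hw hwsupp hxw)
      ).congr_of_eventuallyEq ?_
    filter_upwards [(isClosed_tsupport w).compl_mem_nhds hxw] with t ht
    rw [← integral_indicator hΩ, hsplit]
    exact integral_add
      (integrable_comp_sub_smul_of_locallyIntegrable hloc hu.continuous husupp t)
      (integrable_comp_sub_smul (continuousOn_compl_zero_of_hasDerivAt hΦ) hw hwsupp ht)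

end Kernel

theorem coe_sign_eq_real_sign (z : ℝ) : (SignType.sign z : ℝ) = Real.sign z := by
  rcases lt_trichotomy z 0 with hz | rfl | hz
  · simp [hz, Real.sign_of_neg]
  · simp
  · simp [hz, Real.sign_of_pos]

theorem continuousOn_sign_mul_abs_rpow (p : ℝ) :
    ContinuousOn (fun z : ℝ => Real.sign z * |z| ^ p) {0}ᶜ := by
  intro z hz
  have hsign : ContinuousAt Real.sign z := by
    simp only [← funext coe_sign_eq_real_sign]
    exact (continuous_of_discreteTopology (f := fun σ : SignType => (σ : ℝ))).continuousAt.comp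
      (continuousAt_sign_of_ne_zero hz)
  have habs : ContinuousAt (fun z : ℝ => |z| ^ p) z :=
    continuous_abs.continuousAt.rpow_const (Or.inl (abs_ne_zero.2 hz))
  exact (hsign.mul habs).continuousWithinAt

theorem locallyIntegrable_of_intervalIntegrable {F : Type*} [NormedAddCommGroup F] {f : ℝ → F}
    {μ : Measure ℝ} (hf : ∀ a b, IntervalIntegrable f μ a b) : LocallyIntegrable f μ := fun x =>
  ⟨Ioc (x - 1) (x + 1), Ioc_mem_nhds (by linarith) (by linarith), (hf _ _).1⟩

section Phi

variable {s : ℝ}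

theorem Phi_one_half : Phi (1 / 2) = fun y => Real.log |y| := by
  funext y
  exact if_pos rfl

theorem Phi_of_ne_one_half (hs : s ≠ 1 / 2) :
    Phi s = fun y => |y| ^ (1 - 2 * s) / (1 - 2 * s) := by
  funext y
  exact if_neg hs

theorem even_Phi (s : ℝ) : Function.Even (Phi s) := fun y => by simp only [Phi, abs_neg]

theorem hasDerivAt_Phi (s : ℝ) {z : ℝ} (hz : z ≠ 0) :
    HasDerivAt (Phi s) (Real.sign z * |z| ^ (-(2 * s))) z := by
  have habs : HasDerivAt (fun y : ℝ => |y|) (Real.sign z) z :=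
    coe_sign_eq_real_sign z ▸ hasDerivAt_abs hz
  have habs_ne : |z| ≠ 0 := abs_ne_zero.2 hz
  rcases eq_or_ne s (1 / 2) with rfl | hs
  · rw [Phi_one_half]
    refine (habs.log habs_ne).congr_deriv ?_
    norm_num [Real.rpow_neg_one, div_eq_mul_inv]
  · have hexp : 1 - 2 * s ≠ 0 := fun h => hs (by linarith)
    rw [Phi_of_ne_one_half hs]
    refine ((habs.rpow_const (Or.inl habs_ne)).div_const _).congr_deriv ?_
    rw [show 1 - 2 * s - 1 = -(2 * s) by ring]
    field_simp

theorem locallyIntegrable_Phi (hs : s < 1) : LocallyIntegrable (Phi s) := by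
  refine locallyIntegrable_of_intervalIntegrable fun a b => ?_
  refine intervalIntegrable_of_even (fun y => (even_Phi s y).symm) fun R hR => ?_
  rcases eq_or_ne s (1 / 2) with rfl | hs'
  · simp only [Phi_one_half, Real.log_abs]
    exact intervalIntegral.intervalIntegrable_log'
  · rw [Phi_of_ne_one_half hs']
    have hpow := intervalIntegral.intervalIntegrable_rpow' (a := 0) (b := R) (r := 1 - 2 * s)
      (by linarith)
    refine (hpow.div_const (1 - 2 * s)).congr fun y hy => ?_
    rw [uIoc_of_le hR.le] at hy
    simp only [abs_of_pos hy.1]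

theorem tendsto_Phi_mul_self_nhdsGT_zero (hs : s < 1) :
    Tendsto (fun ε => Phi s ε * ε) (𝓝[>] 0) (𝓝 0) := by
  rcases eq_or_ne s (1 / 2) with rfl | hs'
  · simpa only [Phi_one_half, Real.log_abs, Real.rpow_one] using
      tendsto_log_mul_rpow_nhdsGT_zero zero_lt_one
  · have hpow : Tendsto (fun ε : ℝ => ε ^ (2 - 2 * s) / (1 - 2 * s)) (𝓝[>] 0) (𝓝 0) := by
      have hcont : ContinuousAt (fun ε : ℝ => ε ^ (2 - 2 * s) / (1 - 2 * s)) 0 :=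
        (Real.continuousAt_rpow_const _ _ (Or.inr (by linarith))).div_const _
      simpa [Real.zero_rpow (show 2 - 2 * s ≠ 0 by linarith)] using
        hcont.tendsto.mono_left nhdsWithin_le_nhds
    refine hpow.congr' ?_
    filter_upwards [self_mem_nhdsWithin] with ε (hε : 0 < ε)
    simp only [Phi_of_ne_one_half hs', abs_of_pos hε]
    rw [show 2 - 2 * s = 1 - 2 * s + 1 by ring, Real.rpow_add_one hε.ne']
    ring

end Phi

theorem stmt1_general [CompleteSpace E] {s : ℝ} (hs : s < 1)
    {Ω : Set ℝ} (hΩ : MeasurableSet Ω) (hbdd : IsBounded Ω) {x : ℝ} (hxΩ : Ω ∈ 𝓝 x)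
    {v : ℝ → E} (hv : ContDiffAt ℝ 1 v x) (hint : IntegrableOn v Ω) :
    ∃ L : E,
      Tendsto (fun ε : ℝ => ∫ y in Ω \ Ioo (x - ε) (x + ε),
        (Real.sign (x - y) * |x - y| ^ (-(2 * s))) • v y) (𝓝[>] 0) (𝓝 L) ∧
      HasDerivAt (fun t : ℝ => ∫ y in Ω, Phi s (t - y) • v y) L x :=
  exists_tendsto_and_hasDerivAt_setIntegral_comp_sub_smul (fun _ hz => hasDerivAt_Phi s hz)
    (continuousOn_sign_mul_abs_rpow _) (even_Phi s) (locallyIntegrable_Phi hs)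
    (tendsto_Phi_mul_self_nhdsGT_zero hs) hΩ hbdd hxΩ hv hint

theorem stmt1 (s : ℝ) (hs : s ∈ Set.Ioo (0 : ℝ) 1)
    (M : ℕ) (hM : 1 ≤ M) (a b : Fin M → ℝ) (hab : ∀ i, a i < b i)
    (hdisj : ∀ i j, i ≠ j → Disjoint (Set.Icc (a i) (b i)) (Set.Icc (a j) (b j)))
    (v : ℝ → ℝ)
    (hv : ContDiffOn ℝ 1 v (⋃ i, Set.Ioo (a i) (b i)))
    (hint : MeasureTheory.IntegrableOn v (⋃ i, Set.Ioo (a i) (b i)))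
    (x : ℝ) (hx : x ∈ ⋃ i, Set.Ioo (a i) (b i)) :
    ∃ L : ℝ,
      Filter.Tendsto
        (fun ε : ℝ => ∫ y in (⋃ i, Set.Ioo (a i) (b i)) \ Set.Ioo (x - ε) (x + ε),
          Real.sign (x - y) * |x - y| ^ (-(2 * s)) * v y)
        (nhdsWithin 0 (Set.Ioi 0)) (nhds L) ∧
      HasDerivAt (fun t : ℝ => ∫ y in (⋃ i, Set.Ioo (a i) (b i)), Phi s (t - y) * v y) L x := by
  have hopen : IsOpen (⋃ i, Ioo (a i) (b i)) := isOpen_iUnion fun _ => isOpen_Ioo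
  have hbdd : IsBounded (⋃ i, Ioo (a i) (b i)) :=
    isBounded_iUnion.2 fun _ => Metric.isBounded_Ioo _ _
  have hxΩ := hopen.mem_nhds hx
  exact stmt1_general hs.2 hopen.measurableSet hbdd hxΩ (hv.contDiffAt hxΩ) hint
end

section
/- Let s ∈ (0,1) and n ∈ ℕ∪{0}. Then for every x ∈ (0,1), N_{s+n}^s(x) = Σ_{k=0}^∞ ((2s)_k / (s−n+k)) x^k / k!, and the power series on the right-hand side converges for every complex x with |x| < 1; consequently N_{s+n}^s extends analytically to the unit disc {x ∈ ℂ : |x| < 1}. -/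
open MeasureTheory Filter Set

/-- `Npv s α x L` means the principal value
`P.V. ∫_0^1 sgn(x−y)|x−y|^{−2s} y^{α−1} dy` exists and equals `L`. -/
def Npv (s α x L : ℝ) : Prop :=
  Filter.Tendsto
    (fun ε : ℝ => ∫ y in Set.Ioo (0 : ℝ) 1 \ Set.Ioo (x - ε) (x + ε),
      Real.sign (x - y) * |x - y| ^ (-(2 * s)) * y ^ (α - 1))
    (nhdsWithin 0 (Set.Ioi 0)) (nhds L)

/-- The coefficient `(2s)_k / (s−n+k) / k!` of the series in Theorem 3.3. -/
noncomputable def NsCoeff (s : ℝ) (n k : ℕ) : ℝ :=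
  (Real.Gamma (2 * s + k) / Real.Gamma (2 * s)) / (s - n + k) / (k.factorial : ℝ)

/-!
Inversion `y ↦ x² / y` preserves the measure `|x - y|^(-2s) y^(s-1) dy`, so for `α = s` the integral
over `(x, 1)` cancels the one over `(x², x)`. What remains is the integral over `(0, x²)`, a regular
integral that the binomial series evaluates term by term to the claimed series with `n = 0`.

Integrating the derivative of `(x - y) |x - y|^(-2s) y^α` expresses `N_{α+1}` through `N_α`, the
boundary terms at `x ± ε` cancelling in the limit because `2s < 2`. The series obey the same
recurrence, whence the case of general `n` by induction.
-/

open scoped Topology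

section BinomialSeries

variable {K : Type*} [Field K] [CharZero K]

lemma multichoose_eq_ascPochhammer_eval_div_factorial (a : K) (k : ℕ) :
    Ring.multichoose a k = (ascPochhammer K k).eval a / (k.factorial : K) := by
  rw [eq_div_iff (by exact_mod_cast k.factorial_ne_zero), ← nsmul_eq_mul',
    Ring.factorial_nsmul_multichoose_eq_ascPochhammer, Polynomial.ascPochhammer_smeval_cast,
    Polynomial.ascPochhammer_smeval_eq_eval]

lemma multichoose_succ (a : K) (k : ℕ) :
    Ring.multichoose a (k + 1) = (a + k) / (k + 1) * Ring.multichoose a k := by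
  simp only [multichoose_eq_ascPochhammer_eval_div_factorial, ascPochhammer_succ_eval,
    Nat.factorial_succ, Nat.cast_mul, Nat.cast_succ]
  rw [mul_comm, mul_div_mul_comm]

lemma multichoose_sub_one_succ (a : K) (k : ℕ) :
    Ring.multichoose (a - 1) (k + 1) = (a - 1) / (k + 1) * Ring.multichoose a k := by
  simp only [multichoose_eq_ascPochhammer_eval_div_factorial, ascPochhammer_succ_left,
    Nat.factorial_succ, Nat.cast_mul, Nat.cast_succ, Polynomial.eval_mul, Polynomial.eval_X,
    Polynomial.eval_comp, Polynomial.eval_add, Polynomial.eval_one, sub_add_cancel]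
  rw [mul_div_mul_comm]

lemma hasSum_multichoose_mul_pow (a : ℝ) {x : ℝ} (hx : |x| < 1) :
    HasSum (fun k => Ring.multichoose a k * x ^ k) ((1 - x) ^ (-a)) := by
  have h := (Real.one_div_one_sub_rpow_hasFPowerSeriesOnBall_zero a).hasSum (y := x)
    (by simpa [enorm_eq_nnnorm, ← NNReal.coe_lt_coe] using hx)
  simpa only [FormalMultilinearSeries.ofScalars_apply_eq, ← Ring.multichoose_eq, zero_add,
    smul_eq_mul, one_div, ← Real.rpow_neg (sub_pos.2 (abs_lt.1 hx).2).le] using h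

end BinomialSeries

lemma differentiableOn_tsum_mul_pow {c : ℕ → ℂ} {R : ℝ}
    (hc : ∀ z : ℂ, ‖z‖ < R → Summable fun k => c k * z ^ k) :
    DifferentiableOn ℂ (fun z => ∑' k, c k * z ^ k) (Metric.ball 0 R) := by
  intro z hz
  obtain ⟨r, hzr, hrR⟩ := exists_between (mem_ball_zero_iff.1 hz)
  have hr : 0 ≤ r := (norm_nonneg z).trans hzr.le
  have hnorm : ‖(r : ℂ)‖ = r := Complex.norm_of_nonneg hr
  have hbound : ∀ k, ∀ w ∈ Metric.ball (0 : ℂ) r, ‖c k * w ^ k‖ ≤ ‖c k * (r : ℂ) ^ k‖ := by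
    intro k w hw
    rw [norm_mul, norm_mul, norm_pow, norm_pow, hnorm]
    gcongr
    exact (mem_ball_zero_iff.1 hw).le
  have hdiff : DifferentiableOn ℂ (fun z => ∑' k, c k * z ^ k) (Metric.ball 0 r) :=
    Complex.differentiableOn_tsum_of_summable_norm (hc r (hnorm.trans_lt hrR)).norm
      (fun k => by fun_prop) Metric.isOpen_ball hbound
  exact (hdiff.differentiableAt
    (Metric.isOpen_ball.mem_nhds (mem_ball_zero_iff.2 hzr))).differentiableWithinAt

/-- The power series `∑ (p)_k / k! * x ^ k / (β + k)`, with `(p)_k / k!` written as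
`Ring.multichoose p k`. For `0 < β` it is `x ^ (-β)` times the incomplete Beta integral
`∫ t in 0..x, (1 - t) ^ (-p) * t ^ (β - 1)`; here `β` may also be a negative non-integer. -/
noncomputable def betaSeries (p β x : ℝ) : ℝ :=
  ∑' k : ℕ, Ring.multichoose p k / (β + k) * x ^ k

lemma summable_betaSeries (p β : ℝ) {x : ℝ} (hx : |x| < 1) :
    Summable fun k : ℕ => Ring.multichoose p k / (β + k) * x ^ k := by
  have htend : Tendsto (fun k : ℕ => (β + k)⁻¹) cofinite (𝓝 0) := by
    rw [Nat.cofinite_eq_atTop]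
    exact (tendsto_atTop_add_const_left _ β tendsto_natCast_atTop_atTop).inv_tendsto_atTop
  refine ((hasSum_multichoose_mul_pow p hx).summable.norm.mul_tendsto_const htend).congr
    fun k => ?_
  ring

lemma betaSeries_sub_one {p β x : ℝ} (hβ : ∀ k : ℕ, β - 1 + k ≠ 0) (hx : |x| < 1) :
    (1 - β) * betaSeries p (β - 1) x
      = (p - β) * x * betaSeries p β x - (1 - x) ^ (1 - p) := by
  have hden (k : ℕ) : β + k ≠ 0 := fun h => hβ (k + 1) (by push_cast; linear_combination h)
  have hcoeff (k : ℕ) :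
      (p - β) * x * (Ring.multichoose p k / (β + k) * x ^ k)
        - (1 - β) * (Ring.multichoose p (k + 1) / (β - 1 + (k + 1 : ℕ)) * x ^ (k + 1))
      = Ring.multichoose (p - 1) (k + 1) * x ^ (k + 1) := by
    rw [multichoose_succ, multichoose_sub_one_succ,
      show β - 1 + (k + 1 : ℕ) = β + k by push_cast; ring]
    have := hden k
    field_simp
    ring
  have hlower := ((hasSum_nat_add_iff' 1).2 (summable_betaSeries p (β - 1) hx).hasSum).mul_left
    (1 - β)
  have hupper := (summable_betaSeries p β hx).hasSum.mul_left ((p - β) * x)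
  have hbinom := (hasSum_nat_add_iff' 1).2 (hasSum_multichoose_mul_pow (p - 1) hx)
  have key := (hupper.sub hlower).unique (hbinom.congr_fun hcoeff)
  have hβ₀ : β - 1 ≠ 0 := by simpa using hβ 0
  simp only [Finset.range_one, Finset.sum_singleton, pow_zero, mul_one, Nat.cast_zero, add_zero,
    Ring.multichoose_zero_right, neg_sub] at key
  have hzero : (1 - β) * (1 / (β - 1)) = -1 := by
    field_simp
    ring
  unfold betaSeries
  linear_combination hzero - key

lemma Gamma_add_natCast_div_Gamma {a : ℝ} (ha : ∀ k : ℕ, a ≠ -k) (k : ℕ) :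
    Real.Gamma (a + k) / Real.Gamma a = (ascPochhammer ℝ k).eval a := by
  have hpoch : (ascPochhammer ℂ k).eval (a : ℂ) = ((ascPochhammer ℝ k).eval a : ℝ) := by
    rw [← ascPochhammer_map Complex.ofRealHom]
    exact Polynomial.eval_map_apply Complex.ofRealHom a
  have hGamma := Complex.Gamma_add_nat_div_Gamma_eq (n := k) (a : ℂ)
    fun m => by exact_mod_cast ha m
  rw [hpoch, ← Complex.ofReal_natCast, ← Complex.ofReal_add, Complex.Gamma_ofReal,
    Complex.Gamma_ofReal] at hGamma
  exact_mod_cast hGamma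

lemma NsCoeff_eq_multichoose_div {s : ℝ} (hs : ∀ k : ℕ, 2 * s ≠ -k) (n k : ℕ) :
    NsCoeff s n k = Ring.multichoose (2 * s) k / (s - n + k) := by
  rw [NsCoeff, Gamma_add_natCast_div_Gamma hs, multichoose_eq_ascPochhammer_eval_div_factorial,
    div_right_comm]

lemma summable_NsCoeff_mul_pow {s : ℝ} (hs : ∀ k : ℕ, 2 * s ≠ -k) (n : ℕ) {z : ℂ}
    (hz : ‖z‖ < 1) : Summable fun k : ℕ => (NsCoeff s n k : ℂ) * z ^ k := by
  refine Summable.of_norm <| (summable_betaSeries (2 * s) (s - n) (x := ‖z‖)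
    (by rwa [abs_norm])).norm.congr fun k => ?_
  rw [NsCoeff_eq_multichoose_div hs, norm_mul, norm_mul, norm_pow, norm_pow, norm_norm,
    Complex.norm_real]

/-- The absolute value `|x - y| ^ (-p) * y ^ (α - 1)` of the principal value integrand. Leaving the
sign `sgn (x - y)` out lets the two sides of the singularity be treated by the same lemmas. -/
noncomputable def pvKernel (p α x y : ℝ) : ℝ :=
  |x - y| ^ (-p) * y ^ (α - 1)

section Kernel

variable {α x : ℝ}

lemma continuousOn_abs_sub_rpow {S : Set ℝ} (q : ℝ) (hx : x ∉ S) :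
    ContinuousOn (fun y => |x - y| ^ q) S :=
  ContinuousOn.rpow_const (by fun_prop) fun _ hy =>
    Or.inl (abs_ne_zero.2 (sub_ne_zero.2 (ne_of_mem_of_not_mem hy hx).symm))

lemma continuousOn_pvKernel {S : Set ℝ} (p α : ℝ) (h0 : (0 : ℝ) ∉ S) (hx : x ∉ S) :
    ContinuousOn (pvKernel p α x) S :=
  (continuousOn_abs_sub_rpow (-p) hx).mul
    (continuousOn_id.rpow_const fun _ hy => Or.inl (ne_of_mem_of_not_mem hy h0))

lemma intervalIntegrable_pvKernel {a b : ℝ} (p : ℝ) (hα : 0 < α) (hx : x ∉ uIcc a b) :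
    IntervalIntegrable (pvKernel p α x) volume a b :=
  (intervalIntegral.intervalIntegrable_rpow' (by linarith)).continuousOn_mul
    (continuousOn_abs_sub_rpow (-p) hx)

lemma hasDerivAt_mul_abs_rpow {u : ℝ} (q : ℝ) (hu : u ≠ 0) :
    HasDerivAt (fun v => v * |v| ^ q) ((q + 1) * |u| ^ q) u := by
  convert! (hasDerivAt_id u).mul
    ((hasDerivAt_abs hu).rpow_const (p := q) (Or.inl (abs_ne_zero.2 hu))) using 1
  have hsign : u * (SignType.sign u : ℝ) = |u| := self_mul_sign u
  have hpow : |u| * |u| ^ (q - 1) = |u| ^ q := by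
    rw [mul_comm, ← Real.rpow_add_one (abs_ne_zero.2 hu), sub_add_cancel]
  simp only [id]
  linear_combination (-q) * hpow - q * |u| ^ (q - 1) * hsign

lemma hasDerivAt_sub_mul_abs_sub_rpow_mul_rpow {y : ℝ} (p α : ℝ) (hy : y ≠ 0) (hxy : x ≠ y) :
    HasDerivAt (fun y => (x - y) * |x - y| ^ (-p) * y ^ α)
      (α * x * pvKernel p α x y - (α + 1 - p) * pvKernel p (α + 1) x y) y := by
  have hleft := (hasDerivAt_mul_abs_rpow (-p) (sub_ne_zero.2 hxy)).comp y
    ((hasDerivAt_id y).const_sub x)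
  convert! hleft.mul (Real.hasDerivAt_rpow_const (p := α) (Or.inl hy)) using 1
  have hpow : y ^ α = y ^ (α - 1) * y := by
    rw [← Real.rpow_add_one hy, sub_add_cancel]
  simp only [pvKernel, Function.comp_apply, add_sub_cancel_right, hpow]
  ring

lemma integral_pvKernel_add_one {a b : ℝ} (p : ℝ) (hα : 0 < α) (ha : 0 ≤ a) (hab : a ≤ b)
    (hx : x ∉ Icc a b) :
    α * x * (∫ y in a..b, pvKernel p α x y) - (α + 1 - p) * ∫ y in a..b, pvKernel p (α + 1) x y
      = (x - b) * |x - b| ^ (-p) * b ^ α - (x - a) * |x - a| ^ (-p) * a ^ α := by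
  have hx' : x ∉ uIcc a b := by rwa [uIcc_of_le hab]
  have hint := (intervalIntegrable_pvKernel p hα hx').const_mul (α * x)
  have hint' := (intervalIntegrable_pvKernel p (add_pos hα one_pos) hx').const_mul (α + 1 - p)
  have hcont : ContinuousOn (fun y => (x - y) * |x - y| ^ (-p) * y ^ α) (Icc a b) :=
    ((continuousOn_const.sub continuousOn_id).mul (continuousOn_abs_sub_rpow (-p) hx)).mul
      (Real.continuous_rpow_const hα.le).continuousOn
  have hderiv (y : ℝ) (hy : y ∈ Ioo a b) := hasDerivAt_sub_mul_abs_sub_rpow_mul_rpow p α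
    (ha.trans_lt hy.1).ne' (ne_of_mem_of_not_mem (Ioo_subset_Icc_self hy) hx).symm
  rw [← intervalIntegral.integral_const_mul, ← intervalIntegral.integral_const_mul,
    ← intervalIntegral.integral_sub hint hint']
  exact intervalIntegral.integral_eq_sub_of_hasDerivAt_of_le hab hcont hderiv (hint.sub hint')

lemma pvKernel_mul_left {t : ℝ} (p α : ℝ) (hx : 0 < x) (ht : 0 ≤ t) :
    pvKernel p α x (x * t) = x ^ (α - 1 - p) * pvKernel p α 1 t := by
  have habs : |x - x * t| = x * |1 - t| := by
    rw [← mul_one_sub, abs_mul, abs_of_pos hx]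
  rw [pvKernel, pvKernel, habs, Real.mul_rpow hx.le (abs_nonneg _), Real.mul_rpow hx.le ht,
    sub_eq_add_neg _ p, Real.rpow_add hx]
  ring

lemma integral_pvKernel_eq_rpow_mul_integral_one {b : ℝ} (p α : ℝ) (hx : 0 < x) (hb : 0 ≤ b) :
    ∫ y in 0..(x * b), pvKernel p α x y = x ^ (α - p) * ∫ t in 0..b, pvKernel p α 1 t := by
  have hscale : ∫ t in 0..b, pvKernel p α x (x * t)
      = ∫ t in 0..b, x ^ (α - 1 - p) * pvKernel p α 1 t :=
    intervalIntegral.integral_congr fun t ht =>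
      pvKernel_mul_left p α hx (by rw [uIcc_of_le hb] at ht; exact ht.1)
  rw [← mul_zero x, ← intervalIntegral.smul_integral_comp_mul_left, mul_zero, hscale,
    intervalIntegral.integral_const_mul, smul_eq_mul, ← mul_assoc, mul_comm x,
    ← Real.rpow_add_one hx.ne']
  ring_nf

lemma pvKernel_inversion {y : ℝ} (p α : ℝ) (hx : 0 < x) (hy : 0 < y) :
    x ^ (2 * α - p) * (pvKernel p (p - α) x (x ^ 2 / y) * (x ^ 2 / y ^ 2)) = pvKernel p α x y := by
  have habs : |x - x ^ 2 / y| = x * |x - y| / y := by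
    rw [show x - x ^ 2 / y = -(x * (x - y) / y) by field_simp; ring, abs_neg, abs_div, abs_mul,
      abs_of_pos hx, abs_of_pos hy]
  have hpow : x ^ (2 * α - p) * x ^ (-p) * (x ^ 2) ^ (p - α - 1) * x ^ 2 = 1 := by
    rw [← Real.rpow_natCast, ← Real.rpow_mul hx.le, ← Real.rpow_add hx, ← Real.rpow_add hx,
      ← Real.rpow_add hx]
    convert Real.rpow_zero x using 2
    push_cast
    ring
  have hpow' : (y ^ (-p))⁻¹ * (y ^ (p - α - 1))⁻¹ * (y ^ 2)⁻¹ = y ^ (α - 1) := by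
    rw [← Real.rpow_natCast, ← Real.rpow_neg hy.le, ← Real.rpow_neg hy.le, ← Real.rpow_neg hy.le,
      ← Real.rpow_add hy, ← Real.rpow_add hy]
    push_cast
    ring_nf
  rw [pvKernel, pvKernel, habs, Real.div_rpow (by positivity) hy.le,
    Real.mul_rpow hx.le (abs_nonneg _), Real.div_rpow (by positivity) hy.le, ← hpow']
  linear_combination |x - y| ^ (-p) * ((y ^ (-p))⁻¹ * (y ^ (p - α - 1))⁻¹ * (y ^ 2)⁻¹) * hpow

lemma integral_pvKernel_inversion {a b : ℝ} (p α : ℝ) (hx : 0 < x) (ha : 0 < a) (hb : 0 < b)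
    (hxab : x ∉ uIcc a b) :
    ∫ y in a..b, pvKernel p α x y
      = x ^ (2 * α - p) * ∫ w in (x ^ 2 / b)..(x ^ 2 / a), pvKernel p (p - α) x w := by
  have hpos : ∀ y ∈ uIcc a b, 0 < y := fun y hy => (lt_min ha hb).trans_le hy.1
  have hderiv : ∀ y ∈ uIcc a b, HasDerivAt (fun y => x ^ 2 / y) (-(x ^ 2 / y ^ 2)) y := by
    intro y hy
    convert! (hasDerivAt_inv (hpos y hy).ne').const_mul (x ^ 2) using 1
    ring
  have hderiv_cont : ContinuousOn (fun y => -(x ^ 2 / y ^ 2)) (uIcc a b) :=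
    (ContinuousOn.div (by fun_prop) (by fun_prop)
      fun y hy => pow_ne_zero 2 (hpos y hy).ne').neg
  have hkernel_cont :
      ContinuousOn (pvKernel p (p - α) x) ((fun y => x ^ 2 / y) '' uIcc a b) := by
    apply continuousOn_pvKernel
    · rintro ⟨y, hy, h⟩
      have := hpos y hy
      exact (by positivity : x ^ 2 / y ≠ 0) h
    · rintro ⟨y, hy, h⟩
      have hxy : x ^ 2 = x * y := (div_eq_iff (hpos y hy).ne').1 h
      rw [sq] at hxy
      exact hxab (mul_left_cancel₀ hx.ne' hxy ▸ hy)
  rw [intervalIntegral.integral_symm (x ^ 2 / a),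
    ← intervalIntegral.integral_comp_mul_deriv' hderiv hderiv_cont hkernel_cont,
    ← intervalIntegral.integral_neg, ← intervalIntegral.integral_const_mul]
  refine intervalIntegral.integral_congr fun y hy => ?_
  simp only [Function.comp_apply, mul_neg, neg_neg]
  exact (pvKernel_inversion p α hx (hpos y hy)).symm

end Kernel

lemma hasSum_multichoose_mul_rpow_eq_pvKernel_one {p α t : ℝ} (ht₀ : 0 < t) (ht₁ : t < 1) :
    HasSum (fun k : ℕ => Ring.multichoose p k * t ^ (α - 1 + k)) (pvKernel p α 1 t) := by
  have hsum := (hasSum_multichoose_mul_pow p (x := t) (by rwa [abs_of_pos ht₀])).mul_right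
    (t ^ (α - 1))
  rw [pvKernel, abs_of_pos (sub_pos.2 ht₁)]
  refine hsum.congr_fun fun k => ?_
  rw [Real.rpow_add_natCast ht₀.ne']
  ring

lemma neg_one_lt_sub_one_add_natCast {α : ℝ} (hα : 0 < α) (k : ℕ) : -1 < α - 1 + k := by
  have : (0 : ℝ) ≤ k := k.cast_nonneg
  linarith

lemma setIntegral_rpow_sub_one_add_natCast {α r : ℝ} (hα : 0 < α) (hr : 0 ≤ r) (k : ℕ) :
    ∫ t in Ioc 0 r, t ^ (α - 1 + k) = r ^ α * (r ^ k / (α + k)) := by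
  have hαk : 0 < α + k := by positivity
  rw [← intervalIntegral.integral_of_le hr,
    integral_rpow (Or.inl (neg_one_lt_sub_one_add_natCast hα k)),
    show α - 1 + k + 1 = α + k by ring, Real.zero_rpow hαk.ne', sub_zero,
    Real.rpow_add_of_nonneg hr hα.le k.cast_nonneg, Real.rpow_natCast, mul_div_assoc]

lemma integral_pvKernel_one_eq_rpow_mul_betaSeries {α r : ℝ} (p : ℝ) (hα : 0 < α) (hr₀ : 0 ≤ r)
    (hr₁ : r < 1) : ∫ t in 0..r, pvKernel p α 1 t = r ^ α * betaSeries p α r := by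
  let F : ℕ → ℝ → ℝ := fun k t => Ring.multichoose p k * t ^ (α - 1 + k)
  have hF_int (k : ℕ) : Integrable (F k) (volume.restrict (Ioc 0 r)) :=
    (intervalIntegral.intervalIntegrable_rpow'
      (neg_one_lt_sub_one_add_natCast hα k)).1.const_mul _
  have hF_norm (k : ℕ) : ∫ t in Ioc 0 r, ‖F k t‖
      = r ^ α * ‖Ring.multichoose p k / (α + k) * r ^ k‖ := by
    have hterm : EqOn (fun t => ‖F k t‖) (fun t => ‖Ring.multichoose p k‖ * t ^ (α - 1 + k))
        (Ioc 0 r) := fun t ht => by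
      simp only [F, norm_mul, Real.norm_of_nonneg (Real.rpow_nonneg ht.1.le _)]
    have hαk : 0 ≤ α + k := by positivity
    rw [setIntegral_congr_fun measurableSet_Ioc hterm, integral_const_mul,
      setIntegral_rpow_sub_one_add_natCast hα hr₀, norm_mul, norm_div, Real.norm_of_nonneg hαk,
      Real.norm_of_nonneg (pow_nonneg hr₀ k)]
    ring
  have hF_sum : Summable fun k => ∫ t in Ioc 0 r, ‖F k t‖ := by
    simp only [hF_norm]
    exact (summable_betaSeries p α (by rwa [abs_of_nonneg hr₀])).norm.mul_left _
  have hkernel : ∫ t in Ioc 0 r, ∑' k, F k t = ∫ t in 0..r, pvKernel p α 1 t := by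
    rw [intervalIntegral.integral_of_le hr₀]
    exact setIntegral_congr_fun measurableSet_Ioc fun t ht =>
      (hasSum_multichoose_mul_rpow_eq_pvKernel_one ht.1 (ht.2.trans_lt hr₁)).tsum_eq
  rw [← hkernel, ← (hasSum_integral_of_summable_integral_norm hF_int hF_sum).tsum_eq, betaSeries,
    ← tsum_mul_left]
  refine tsum_congr fun k => ?_
  rw [integral_const_mul, setIntegral_rpow_sub_one_add_natCast hα hr₀]
  ring

lemma tendsto_rpow_nhdsGT_zero {q : ℝ} (hq : 0 < q) :
    Tendsto (fun ε : ℝ => ε ^ q) (𝓝[>] 0) (𝓝 0) := by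
  have h := (Real.continuousAt_rpow_const 0 q (Or.inr hq.le)).tendsto
  rw [Real.zero_rpow hq.ne'] at h
  exact h.mono_left nhdsWithin_le_nhds

lemma tendsto_rpow_mul_rpow_sub_rpow {p x : ℝ} (α : ℝ) (hp : p < 2) (hx : x ≠ 0) :
    Tendsto (fun ε : ℝ => ε ^ (1 - p) * ((x - ε) ^ α - (x + ε) ^ α)) (𝓝[>] 0) (𝓝 0) := by
  have hderiv : DifferentiableAt ℝ (fun ε : ℝ => (x - ε) ^ α - (x + ε) ^ α) 0 :=
    (DifferentiableAt.rpow_const (by fun_prop) (Or.inl (by simpa using hx))).sub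
      (DifferentiableAt.rpow_const (by fun_prop) (Or.inl (by simpa using hx)))
  have hslope := hderiv.hasDerivAt.tendsto_slope_zero_right
  have hlim := (tendsto_rpow_nhdsGT_zero (sub_pos.2 hp)).mul hslope
  rw [zero_mul] at hlim
  refine hlim.congr' ?_
  filter_upwards [self_mem_nhdsWithin] with ε (hε : 0 < ε)
  simp only [zero_add, smul_eq_mul, sub_zero, add_zero, sub_self]
  rw [show 2 - p = 1 - p + 1 by ring, Real.rpow_add_one hε.ne']
  field_simp

/-- The principal value integral with the window `(x - ε, x + ε)` removed, as a difference of
interval integrals. This is the integral in `Npv` only when `0 < ε < min x (1 - x)`, which is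
enough for the limit `ε → 0⁺`. -/
noncomputable def truncatedPV (p α x ε : ℝ) : ℝ :=
  (∫ y in 0..(x - ε), pvKernel p α x y) - ∫ y in (x + ε)..1, pvKernel p α x y

lemma Ioo_sdiff_Ioo {β : Type*} [LinearOrder β] {a b c d : β} (hcb : c < b) (had : a < d) :
    Ioo a b \ Ioo c d = Ioc a c ∪ Ico d b := by
  ext y
  simp only [Set.mem_sdiff, mem_Ioo, mem_union, mem_Ioc, mem_Ico]
  grind

section Truncation

variable {p α x ε : ℝ}

lemma integral_sdiff_eq_truncatedPV {s : ℝ} (hα : 0 < α) (hε : 0 < ε) (hεx : ε < x)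
    (hεx' : ε < 1 - x) :
    ∫ y in Ioo (0 : ℝ) 1 \ Ioo (x - ε) (x + ε),
        Real.sign (x - y) * |x - y| ^ (-(2 * s)) * y ^ (α - 1)
      = truncatedPV (2 * s) α x ε := by
  have hleft : EqOn (pvKernel (2 * s) α x)
      (fun y => Real.sign (x - y) * |x - y| ^ (-(2 * s)) * y ^ (α - 1)) (Ioc 0 (x - ε)) := by
    intro y hy
    simp only [pvKernel, Real.sign_of_pos (show 0 < x - y by linarith [hy.2]), one_mul]
  have hright : EqOn (fun y => -pvKernel (2 * s) α x y)
      (fun y => Real.sign (x - y) * |x - y| ^ (-(2 * s)) * y ^ (α - 1)) (Ico (x + ε) 1) := by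
    intro y hy
    simp only [pvKernel, Real.sign_of_neg (show x - y < 0 by linarith [hy.1]), one_mul, neg_mul]
  have hint_left : IntegrableOn (pvKernel (2 * s) α x) (Ioc 0 (x - ε)) :=
    (intervalIntegrable_pvKernel _ hα (notMem_uIcc_of_gt (hε.trans hεx) (by linarith))).1
  have hint_right : IntegrableOn (pvKernel (2 * s) α x) (Ico (x + ε) 1) :=
    ((intervalIntegrable_iff_integrableOn_Icc_of_le (by linarith)).1 <|
      intervalIntegrable_pvKernel _ hα (notMem_uIcc_of_lt (by linarith) (by linarith))).mono_set
      Ico_subset_Icc_self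
  have hdisj : Disjoint (Ioc 0 (x - ε)) (Ico (x + ε) 1) :=
    Set.disjoint_left.2 fun y hy hy' => by linarith [hy.2, hy'.1]
  rw [Ioo_sdiff_Ioo (by linarith) (by linarith),
    setIntegral_union hdisj measurableSet_Ico (hint_left.congr_fun hleft measurableSet_Ioc)
      (hint_right.neg.congr_fun hright measurableSet_Ico),
    ← setIntegral_congr_fun measurableSet_Ioc hleft,
    ← setIntegral_congr_fun measurableSet_Ico hright, integral_neg, truncatedPV,
    intervalIntegral.integral_of_le (by linarith), intervalIntegral.integral_of_le (by linarith),
    integral_Ico_eq_integral_Ioo, integral_Ioc_eq_integral_Ioo (x := x + ε),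
    ← sub_eq_add_neg]

lemma eventually_pos_and_lt_and_lt_one_sub (hx : x ∈ Ioo (0 : ℝ) 1) :
    ∀ᶠ ε in 𝓝[>] (0 : ℝ), 0 < ε ∧ ε < x ∧ ε < 1 - x := by
  filter_upwards [Ioo_mem_nhdsGT (lt_min hx.1 (sub_pos.2 hx.2))] with ε hε
  exact ⟨hε.1, lt_min_iff.1 hε.2⟩

lemma Npv_iff_tendsto_truncatedPV {s L : ℝ} (hα : 0 < α) (hx : x ∈ Ioo (0 : ℝ) 1) :
    Npv s α x L ↔ Tendsto (truncatedPV (2 * s) α x) (𝓝[>] 0) (𝓝 L) := by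
  refine tendsto_congr' ?_
  filter_upwards [eventually_pos_and_lt_and_lt_one_sub hx] with ε ⟨hε, hεx, hεx'⟩
  exact integral_sdiff_eq_truncatedPV hα hε hεx hεx'

lemma truncatedPV_add_one (p : ℝ) (hα : 0 < α) (hε : 0 < ε) (hεx : ε < x) (hεx' : ε < 1 - x) :
    (α + 1 - p) * truncatedPV p (α + 1) x ε = α * x * truncatedPV p α x ε
      - (ε ^ (1 - p) * ((x - ε) ^ α - (x + ε) ^ α) + (1 - x) ^ (1 - p)) := by
  have hself {u : ℝ} (hu : 0 < u) : u * |u| ^ (-p) = u ^ (1 - p) := by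
    rw [abs_of_pos hu, mul_comm, ← Real.rpow_add_one hu.ne', neg_add_eq_sub]
  have hleft := integral_pvKernel_add_one (x := x) p hα le_rfl (sub_pos.2 hεx).le
    (notMem_Icc_of_gt (sub_lt_self x hε))
  have hright := integral_pvKernel_add_one (x := x) p hα (a := x + ε) (b := 1) (by linarith)
    (by linarith) (notMem_Icc_of_lt (lt_add_of_pos_right x hε))
  rw [Real.zero_rpow hα.ne', sub_sub_cancel, hself hε] at hleft
  rw [Real.one_rpow, abs_sub_comm x 1, sub_add_cancel_left, abs_neg] at hright
  have h1x : (1 - x) * |1 - x| ^ (-p) = (1 - x) ^ (1 - p) := hself (by linarith)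
  have hε' : ε * |ε| ^ (-p) = ε ^ (1 - p) := hself hε
  unfold truncatedPV
  linear_combination hright - hleft - h1x + (x + ε) ^ α * hε'

lemma tendsto_truncatedPV_add_one (hp : p < 2) (hα : 0 < α) (hβ : ∀ k : ℕ, p - α - 1 + k ≠ 0)
    (hx : x ∈ Ioo (0 : ℝ) 1)
    (h : Tendsto (truncatedPV p α x) (𝓝[>] 0) (𝓝 (betaSeries p (p - α) x))) :
    Tendsto (truncatedPV p (α + 1) x) (𝓝[>] 0) (𝓝 (betaSeries p (p - (α + 1)) x)) := by
  have hne : α + 1 - p ≠ 0 := fun h0 => hβ 0 (by push_cast; linear_combination -h0)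
  have hseries := betaSeries_sub_one (p := p) hβ (x := x) (by rw [abs_of_pos hx.1]; exact hx.2)
  have hlim := ((h.const_mul (α * x)).sub ((tendsto_rpow_mul_rpow_sub_rpow α hp
    hx.1.ne').add_const ((1 - x) ^ (1 - p)))).const_mul (α + 1 - p)⁻¹
  have hvalue : (α + 1 - p)⁻¹ * (α * x * betaSeries p (p - α) x - (0 + (1 - x) ^ (1 - p)))
      = betaSeries p (p - (α + 1)) x := by
    rw [inv_mul_eq_iff_eq_mul₀ hne, ← sub_sub p α 1]
    linear_combination -hseries
  rw [hvalue] at hlim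
  refine hlim.congr' ?_
  filter_upwards [eventually_pos_and_lt_and_lt_one_sub hx] with ε ⟨hε, hεx, hεx'⟩
  rw [← truncatedPV_add_one p hα hε hεx hεx', inv_mul_cancel_left₀ hne]

/- The inversion `y ↦ x ^ 2 / y` maps `(x + ε, 1)` to `(x ^ 2, x ^ 2 / (x + ε))`, whose right end
differs from `x - ε` by only `O(ε ^ 2)`. -/
lemma truncatedPV_two_mul_self {s : ℝ} (hs : 0 < s) (hε : 0 < ε) (hεx : ε < x) (hεx' : ε < 1 - x) :
    truncatedPV (2 * s) s x ε = (∫ y in 0..x ^ 2, pvKernel (2 * s) s x y)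
      - ∫ y in (x - ε)..(x ^ 2 / (x + ε)), pvKernel (2 * s) s x y := by
  have hx : 0 < x := hε.trans hεx
  have hint {b : ℝ} (hb : b < x) : IntervalIntegrable (pvKernel (2 * s) s x) volume 0 b :=
    intervalIntegrable_pvKernel _ hs (notMem_uIcc_of_gt hx hb)
  have hreflect : x ^ 2 / (x + ε) < x := by
    rw [div_lt_iff₀ (by positivity)]
    nlinarith
  rw [truncatedPV, integral_pvKernel_inversion _ _ hx (by positivity) one_pos
      (notMem_uIcc_of_lt (by linarith) (by linarith)), sub_self, Real.rpow_zero, one_mul, div_one,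
    show 2 * s - s = s by ring,
    ← intervalIntegral.integral_interval_sub_left (hint hreflect) (hint (sub_lt_self x hε)),
    ← intervalIntegral.integral_interval_sub_left (hint hreflect) (hint (by nlinarith : x ^ 2 < x))]
  ring

lemma norm_integral_pvKernel_sub_reflection_le (hp : 0 ≤ p) (hα : α ≤ 1) (hε : 0 < ε)
    (hεx : ε < x / 2) :
    ‖∫ y in (x - ε)..(x ^ 2 / (x + ε)), pvKernel p α x y‖
      ≤ (1 / 2) ^ (-p) * (x / 2) ^ (α - 1) / x * ε ^ (2 - p) := by
  have hx : 0 < x := by linarith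
  have hlength : x ^ 2 / (x + ε) - (x - ε) = ε ^ 2 / (x + ε) := by
    field_simp
    ring
  have hlength_nonneg : 0 ≤ ε ^ 2 / (x + ε) := by positivity
  have hreflect : x ^ 2 / (x + ε) ≤ x - ε / 2 := by
    rw [div_le_iff₀ (by positivity)]
    nlinarith
  have hbound : ∀ y ∈ uIoc (x - ε) (x ^ 2 / (x + ε)),
      ‖pvKernel p α x y‖ ≤ (ε / 2) ^ (-p) * (x / 2) ^ (α - 1) := by
    intro y hy
    rw [uIoc_of_le (by linarith)] at hy
    have hxy : ε / 2 ≤ |x - y| := (by linarith [hy.2] : ε / 2 ≤ x - y).trans (le_abs_self _)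
    have hxy₂ : x / 2 ≤ y := by linarith [hy.1]
    have hy₀ : 0 < y := by linarith
    rw [pvKernel, Real.norm_of_nonneg (by positivity)]
    have := Real.rpow_le_rpow_of_nonpos (by positivity) hxy (neg_nonpos.2 hp)
    have := Real.rpow_le_rpow_of_nonpos (by positivity) hxy₂ (sub_nonpos.2 hα)
    gcongr
  have hpow : (ε / 2) ^ (-p) * ε ^ 2 = (1 / 2) ^ (-p) * ε ^ (2 - p) := by
    rw [div_eq_mul_one_div, Real.mul_rpow hε.le (by norm_num), mul_right_comm,
      ← Real.rpow_natCast ε 2, ← Real.rpow_add hε, mul_comm]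
    push_cast
    ring_nf
  calc ‖∫ y in (x - ε)..(x ^ 2 / (x + ε)), pvKernel p α x y‖
      ≤ (ε / 2) ^ (-p) * (x / 2) ^ (α - 1) * (ε ^ 2 / (x + ε)) := by
        simpa only [hlength, abs_of_nonneg hlength_nonneg] using
          intervalIntegral.norm_integral_le_of_norm_le_const hbound
    _ ≤ (ε / 2) ^ (-p) * (x / 2) ^ (α - 1) * (ε ^ 2 / x) := by
        gcongr
        linarith
    _ = (1 / 2) ^ (-p) * (x / 2) ^ (α - 1) / x * ε ^ (2 - p) := by
        linear_combination (x / 2) ^ (α - 1) / x * hpow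

lemma tendsto_integral_pvKernel_sub_reflection (hp₀ : 0 ≤ p) (hp₂ : p < 2) (hα : α ≤ 1)
    (hx : 0 < x) :
    Tendsto (fun ε => ∫ y in (x - ε)..(x ^ 2 / (x + ε)), pvKernel p α x y) (𝓝[>] 0) (𝓝 0) := by
  have hlim := (tendsto_rpow_nhdsGT_zero (sub_pos.2 hp₂)).const_mul
    ((1 / 2) ^ (-p) * (x / 2) ^ (α - 1) / x)
  rw [mul_zero] at hlim
  refine squeeze_zero_norm' ?_ hlim
  filter_upwards [Ioo_mem_nhdsGT (half_pos hx)] with ε hε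
  exact norm_integral_pvKernel_sub_reflection_le hp₀ hα hε.1 hε.2

end Truncation

section PrincipalValue

variable {s x : ℝ}

lemma integral_pvKernel_sq_eq_betaSeries (hs : 0 < s) (hx : x ∈ Ioo (0 : ℝ) 1) :
    ∫ y in 0..x ^ 2, pvKernel (2 * s) s x y = betaSeries (2 * s) s x := by
  rw [sq, integral_pvKernel_eq_rpow_mul_integral_one _ _ hx.1 hx.1.le,
    integral_pvKernel_one_eq_rpow_mul_betaSeries _ hs hx.1.le hx.2, ← mul_assoc,
    ← Real.rpow_add hx.1, show s - 2 * s + s = 0 by ring, Real.rpow_zero, one_mul]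

lemma tendsto_truncatedPV_two_mul_self (hs : s ∈ Ioo (0 : ℝ) 1) (hx : x ∈ Ioo (0 : ℝ) 1) :
    Tendsto (truncatedPV (2 * s) s x) (𝓝[>] 0) (𝓝 (betaSeries (2 * s) s x)) := by
  have hlim := (tendsto_integral_pvKernel_sub_reflection (p := 2 * s) (by linarith [hs.1])
    (by linarith [hs.2]) hs.2.le hx.1).const_sub (betaSeries (2 * s) s x)
  rw [sub_zero] at hlim
  refine hlim.congr' ?_
  filter_upwards [eventually_pos_and_lt_and_lt_one_sub hx] with ε ⟨hε, hεx, hεx'⟩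
  rw [truncatedPV_two_mul_self hs.1 hε hεx hεx', integral_pvKernel_sq_eq_betaSeries hs.1 hx]

lemma add_intCast_ne_zero_of_mem_Ioo (hs : s ∈ Ioo (0 : ℝ) 1) (m : ℤ) : s + m ≠ 0 := by
  intro h
  have hpos : (-1 : ℝ) < m := by linarith [hs.2]
  have hneg : (m : ℝ) < 0 := by linarith [hs.1]
  have hpos' : -1 < m := by exact_mod_cast hpos
  have hneg' : m < 0 := by exact_mod_cast hneg
  omega

lemma tendsto_truncatedPV_add_natCast (hs : s ∈ Ioo (0 : ℝ) 1) (hx : x ∈ Ioo (0 : ℝ) 1) (n : ℕ) :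
    Tendsto (truncatedPV (2 * s) (s + n) x) (𝓝[>] 0) (𝓝 (betaSeries (2 * s) (s - n) x)) := by
  induction n with
  | zero => simpa using tendsto_truncatedPV_two_mul_self hs hx
  | succ n ih =>
    have hα : 0 < s + n := add_pos_of_pos_of_nonneg hs.1 n.cast_nonneg
    have hβ (k : ℕ) : 2 * s - (s + n) - 1 + k ≠ 0 := by
      convert add_intCast_ne_zero_of_mem_Ioo hs (k - n - 1) using 1
      push_cast
      ring
    rw [show s - n = 2 * s - (s + n) by ring] at ih
    convert tendsto_truncatedPV_add_one (by linarith [hs.2]) hα hβ hx ih using 2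
    · push_cast
      ring
    · congr 1
      push_cast
      ring

end PrincipalValue

theorem stmt5 (s : ℝ) (hs : s ∈ Set.Ioo (0 : ℝ) 1) (n : ℕ) :
    (∀ z : ℂ, ‖z‖ < 1 → Summable (fun k : ℕ => ((NsCoeff s n k : ℝ) : ℂ) * z ^ k)) ∧
    DifferentiableOn ℂ (fun z : ℂ => ∑' k : ℕ, ((NsCoeff s n k : ℝ) : ℂ) * z ^ k)
      (Metric.ball 0 1) ∧
    ∀ x ∈ Set.Ioo (0 : ℝ) 1, Npv s (s + n) x (∑' k : ℕ, NsCoeff s n k * x ^ k) := by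
  have h2s (k : ℕ) : 2 * s ≠ -k := by
    have : (0 : ℝ) ≤ k := k.cast_nonneg
    linarith [hs.1]
  have hsummable : ∀ z : ℂ, ‖z‖ < 1 → Summable fun k : ℕ => (NsCoeff s n k : ℂ) * z ^ k :=
    fun z => summable_NsCoeff_mul_pow h2s n
  refine ⟨hsummable, differentiableOn_tsum_mul_pow hsummable, fun x hx => ?_⟩
  have hα : 0 < s + n := add_pos_of_pos_of_nonneg hs.1 n.cast_nonneg
  simp only [Npv_iff_tendsto_truncatedPV hα hx, NsCoeff_eq_multichoose_div h2s]
  exact tendsto_truncatedPV_add_natCast hs hx n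
end
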